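/- arXiv:1509.06501 — 10 statements merged into one kernel-verified Lean document; each statement's English description precedes it below -/
import Mathlib

section
/- Let M = (Q, Σ, E, I) be an NFA with all states final such that I is nonempty and every state of Q is reachable (for every q ∈ Q there is a word u with q ∈ M(u)), and let F be a relation flanking M. Then M is universal (every word u ∈ Σ* is accepted by M) if and only if F is the empty relation, i.e. there is no pair (q,a) ∈ Q×Σ with (q,a) ∈ F. -/
/-- A nondeterministic finite automaton (all states final). -/
structure NFA' (Q A : Type) where
  E : Q → A → Q → Prop
  I : Set Q

namespace NFA'

variable {Q A : Type}

/-- One step of the automaton on a set of states. -/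
def step (M : NFA' Q A) (S : Set Q) (a : A) : Set Q := {q' | ∃ q ∈ S, M.E q a q'}

/-- `M.reach u` is the set of states reached after reading the word `u`
(`M(ε) = I`, `M(u·a) = {q' | ∃ q ∈ M(u), (q,a,q') ∈ E}`). -/
def reach (M : NFA' Q A) (u : List A) : Set Q := u.foldl M.step M.I

/-- The (prefix-closed) language of `M`: words `u` with `M(u) ≠ ∅`. -/
def lang (M : NFA' Q A) : Set (List A) := {u | (M.reach u).Nonempty}

/-- `F` flanks `M`: for all words `u` and symbols `a`,
`u ∈ L(M) ∧ u·a ∉ L(M)` iff some state of `M(u)` forbids `a`. -/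
def Flanks (M : NFA' Q A) (F : Q → A → Prop) : Prop :=
  ∀ (u : List A) (a : A),
    (u ∈ M.lang ∧ u ++ [a] ∉ M.lang) ↔ ∃ q ∈ M.reach u, F q a

end NFA'

/-- for an FFA `(M, F)` with nonempty initial set and every state
reachable, `M` is universal iff `F` is the empty relation. -/
theorem stmt0 {Q A : Type} [Fintype Q] [Fintype A]
    (M : NFA' Q A) (F : Q → A → Prop)
    (hI : M.I.Nonempty)
    (hreach : ∀ q : Q, ∃ u : List A, q ∈ M.reach u)
    (hF : M.Flanks F) :
    (∀ u : List A, u ∈ M.lang) ↔ ∀ (q : Q) (a : A), ¬ F q a := by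
  constructor
  · intro hu q a hq
    obtain ⟨u, hqu⟩ := hreach q
    exact ((hF u a).2 ⟨q, hqu, hq⟩).2 (hu _)
  · intro h u
    induction u using List.reverseRecOn with
    | nil => exact hI
    | append_singleton u a ih =>
      by_contra hn
      obtain ⟨q, _, hq⟩ := (hF u a).1 ⟨ih, hn⟩
      exact h q a hq
end

section
/- Let M = (Q, Σ, E, I) be an NFA with all states final, and for a ∈ Σ let M⁻¹(a) = ⋃ { M(v) | v ∈ Σ*, v·a ∈ L(M) } be the set of states reachable by words that can be extended by a. Then M is flankable if and only if for every word u ∈ L(M) and every symbol a ∈ Σ with u·a ∉ L(M), the set M(u) \ M⁻¹(a) is nonempty. -/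
/-- `M` is flankable iff for every accepted word `u` and symbol `a`
with `u·a` not accepted, the set `M(u) \ M⁻¹(a)` is nonempty, where
`M⁻¹(a) = ⋃ {M(v) | v·a ∈ L(M)}`. -/
theorem stmt3 {Q A : Type} [Fintype Q] [Fintype A] (M : NFA' Q A) :
    (∃ F : Q → A → Prop, M.Flanks F) ↔
      ∀ (u : List A) (a : A), u ∈ M.lang → u ++ [a] ∉ M.lang →
        (M.reach u \ {q | ∃ v : List A, q ∈ M.reach v ∧ v ++ [a] ∈ M.lang}).Nonempty := by
  constructor
  · rintro ⟨F, hF⟩ u a hu hua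
    obtain ⟨q, hq, hqa⟩ := (hF u a).1 ⟨hu, hua⟩
    refine ⟨q, hq, ?_⟩
    rintro ⟨v, hv, hva⟩
    exact ((hF v a).2 ⟨q, hv, hqa⟩).2 hva
  · intro h
    refine ⟨fun q a => ¬ ∃ v : List A, q ∈ M.reach v ∧ v ++ [a] ∈ M.lang, ?_⟩
    intro u a
    constructor
    · rintro ⟨hu, hua⟩
      obtain ⟨q, hq, hn⟩ := h u a hu hua
      exact ⟨q, hq, hn⟩
    · rintro ⟨q, hq, hn⟩
      exact ⟨⟨q, hq⟩, fun hua => hn ⟨u, hq, hua⟩⟩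
end

section
/- There exists an NFA with all states final, over a two-letter alphabet and with four states, that is not flankable: the automaton with states {q0,q1,q2,q3}, initial state q0, and transitions q0 →a q1, q0 →b q1, q0 →a q2, q2 →b q3 admits no flanking relation. -/
/-- The 4-state NFA over a 2-letter alphabet (`0` is `a`, `1` is `b`) with
transitions q0 →a q1, q0 →b q1, q0 →a q2, q2 →b q3 and initial state q0. -/
def M4 : NFA' (Fin 4) (Fin 2) where
  E q x q' :=
    (q = 0 ∧ x = 0 ∧ q' = 1) ∨ (q = 0 ∧ x = 1 ∧ q' = 1) ∨
    (q = 0 ∧ x = 0 ∧ q' = 2) ∨ (q = 2 ∧ x = 1 ∧ q' = 3)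
  I := {0}

/-- the automaton `M4` is not flankable. -/
theorem stmt4 : ¬ ∃ F : Fin 4 → Fin 2 → Prop, M4.Flanks F := by
  rintro ⟨F, hF⟩
  have h1 : ∀ q, q ∈ M4.reach [1] ↔ q = 1 := by
    intro q
    simp [NFA'.reach, NFA'.step, M4]
  have h2 : ([1, 1] : List (Fin 2)) ∉ M4.lang := by
    simp [NFA'.lang, NFA'.reach, NFA'.step, M4, Set.Nonempty]
  have h3 : (1 : Fin 4) ∈ M4.reach [0] := by
    simp [NFA'.reach, NFA'.step, M4]
  have h4 : ([0, 1] : List (Fin 2)) ∈ M4.lang := by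
    refine ⟨3, 2, ⟨0, rfl, ?_⟩, ?_⟩ <;> simp [M4]
  obtain ⟨q, hq, hFq⟩ := (hF [1] 1).1 ⟨⟨1, (h1 1).2 rfl⟩, h2⟩
  rw [h1] at hq
  subst hq
  exact ((hF [0] 1).2 ⟨1, h3, hFq⟩).2 h4
end

section
/- Let M1 = (Q1, Σ, E1, I1) be an NFA with all states final, let (M2, F2) be an FFA with M2 = (Q2, Σ, E2, I2), and let P be the product NFA with state set (Q1×Q2) ∪ {⊥}, initial states I1×I2, transitions (q1,q2) →a (q1',q2') whenever q1 →a q1' in M1 and q2 →a q2' in M2, and (q1,q2) →a ⊥ whenever q1 →a q1' in M1 for some q1' and (q2,a) ∈ F2. Then every word u with ⊥ ∈ P(u) is accepted by M1 and not accepted by M2. -/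
/-- Product of an NFA `M1` with an FFA `(M2, F2)`, with an extra error state `⊥`
(encoded as `none`): `(q1,q2) →a (q1',q2')` when `q1 →a q1'` and `q2 →a q2'`, and
`(q1,q2) →a ⊥` when `q1` has an outgoing `a`-transition and `(q2,a) ∈ F2`;
`⊥` has no outgoing transitions. -/
def prodBot {Q1 Q2 A : Type} (M1 : NFA' Q1 A) (M2 : NFA' Q2 A)
    (F2 : Q2 → A → Prop) : NFA' (Option (Q1 × Q2)) A where
  E s a s' :=
    (∃ q1 q2 q1' q2', s = some (q1, q2) ∧ s' = some (q1', q2') ∧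
        M1.E q1 a q1' ∧ M2.E q2 a q2') ∨
    (∃ q1 q2, s = some (q1, q2) ∧ s' = none ∧ (∃ q1', M1.E q1 a q1') ∧ F2 q2 a)
  I := {s | ∃ q1 ∈ M1.I, ∃ q2 ∈ M2.I, s = some (q1, q2)}

theorem reach_snoc_aux {Q A : Type} (M : NFA' Q A) (u : List A) (a : A) :
    M.reach (u ++ [a]) = M.step (M.reach u) a := by
  simp [NFA'.reach, List.foldl_append]

theorem prodBot_reach_aux {Q1 Q2 A : Type} (M1 : NFA' Q1 A) (M2 : NFA' Q2 A)
    (F2 : Q2 → A → Prop) (u : List A) : ∀ q1 q2,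
    some (q1, q2) ∈ (prodBot M1 M2 F2).reach u → q1 ∈ M1.reach u ∧ q2 ∈ M2.reach u := by
  induction u using List.reverseRecOn with
  | nil =>
    rintro q1 q2 ⟨p1, h1, p2, h2, he⟩
    cases he
    exact ⟨h1, h2⟩
  | append_singleton u a ih =>
    intro q1 q2 h
    rw [reach_snoc_aux] at h
    rw [reach_snoc_aux, reach_snoc_aux]
    obtain ⟨s, hs, ⟨p1, p2, r1, r2, rfl, he, e1, e2⟩ | ⟨p1, p2, rfl, he, _⟩⟩ := h
    · cases he
      obtain ⟨i1, i2⟩ := ih _ _ hs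
      exact ⟨⟨p1, i1, e1⟩, ⟨p2, i2, e2⟩⟩
    · cases he

/-- every word reaching the error state `⊥` in the product automaton
is accepted by `M1` and not accepted by `M2`. -/
theorem stmt6 {Q1 Q2 A : Type} [Fintype Q1] [Fintype Q2] [Fintype A]
    (M1 : NFA' Q1 A) (M2 : NFA' Q2 A) (F2 : Q2 → A → Prop)
    (h2 : M2.Flanks F2) :
    ∀ u : List A, none ∈ (prodBot M1 M2 F2).reach u →
      u ∈ M1.lang ∧ u ∉ M2.lang := by
  intro u
  induction u using List.reverseRecOn with
  | nil =>
    rintro ⟨p1, h1, p2, h2, he⟩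
    cases he
  | append_singleton u a _ =>
    intro h
    rw [reach_snoc_aux] at h
    obtain ⟨s, hs, ⟨p1, p2, r1, r2, rfl, he, e1, e2⟩ | ⟨p1, p2, rfl, _, ⟨r1, e1⟩, hf⟩⟩ := h
    · cases he
    · obtain ⟨i1, i2⟩ := prodBot_reach_aux M1 M2 F2 u _ _ hs
      refine ⟨?_, ((h2 u a).2 ⟨p2, i2, hf⟩).2⟩
      refine ⟨r1, ?_⟩
      rw [reach_snoc_aux]
      exact ⟨p1, i1, e1⟩
end

section
/- Let (M1, F1) and (M2, F2) be FFA over the same alphabet Σ, with Mi = (Qi, Σ, Ei, Ii). Let M be the synchronous product NFA with state set Q1×Q2, initial states I1×I2, and transitions (q1,q2) →a (q1',q2') whenever q1 →a q1' in M1 and q2 →a q2' in M2, and let F ⊆ (Q1×Q2)×Σ be defined by ((q1,q2),a) ∈ F iff (q1,a) ∈ F1 or (q2,a) ∈ F2. Then L(M) = L(M1) ∩ L(M2) and F flanks M. -/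
/-- Synchronous product of two NFA. -/
def prodAut {Q1 Q2 A : Type} (M1 : NFA' Q1 A) (M2 : NFA' Q2 A) :
    NFA' (Q1 × Q2) A where
  E s a s' := M1.E s.1 a s'.1 ∧ M2.E s.2 a s'.2
  I := {s | s.1 ∈ M1.I ∧ s.2 ∈ M2.I}

theorem reach_prod {Q1 Q2 A : Type} (M1 : NFA' Q1 A) (M2 : NFA' Q2 A) (u : List A) :
    ∀ s : Q1 × Q2, s ∈ (prodAut M1 M2).reach u ↔ s.1 ∈ M1.reach u ∧ s.2 ∈ M2.reach u := by
  induction u using List.reverseRecOn with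
  | nil => intro s; exact Iff.rfl
  | append_singleton u a ih =>
    intro s
    simp only [NFA'.reach, List.foldl_append, List.foldl_cons, List.foldl_nil] at ih ⊢
    constructor
    · rintro ⟨q, hq, hE⟩
      exact ⟨⟨q.1, ((ih q).1 hq).1, hE.1⟩, ⟨q.2, ((ih q).1 hq).2, hE.2⟩⟩
    · rintro ⟨⟨p, hp, hE⟩, ⟨q, hq, hE'⟩⟩
      exact ⟨(p, q), (ih (p, q)).2 ⟨hp, hq⟩, hE, hE'⟩

theorem lang_prod {Q1 Q2 A : Type} (M1 : NFA' Q1 A) (M2 : NFA' Q2 A) (u : List A) :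
    u ∈ (prodAut M1 M2).lang ↔ u ∈ M1.lang ∧ u ∈ M2.lang := by
  constructor
  · rintro ⟨s, hs⟩
    have h := (reach_prod M1 M2 u s).1 hs
    exact ⟨⟨_, h.1⟩, ⟨_, h.2⟩⟩
  · rintro ⟨⟨p, hp⟩, ⟨q, hq⟩⟩
    exact ⟨(p, q), (reach_prod M1 M2 u (p, q)).2 ⟨hp, hq⟩⟩

/-- the synchronous product of two FFA accepts the intersection of
their languages, and is flanked by `((q1,q2),a) ∈ F` iff `(q1,a) ∈ F1` or `(q2,a) ∈ F2`. -/
theorem stmt7 {Q1 Q2 A : Type} [Fintype Q1] [Fintype Q2] [Fintype A]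
    (M1 : NFA' Q1 A) (M2 : NFA' Q2 A)
    (F1 : Q1 → A → Prop) (F2 : Q2 → A → Prop)
    (h1 : M1.Flanks F1) (h2 : M2.Flanks F2) :
    (prodAut M1 M2).lang = M1.lang ∩ M2.lang ∧
    (prodAut M1 M2).Flanks (fun s a => F1 s.1 a ∨ F2 s.2 a) := by
  refine ⟨Set.ext (lang_prod M1 M2), ?_⟩
  intro u a
  rw [lang_prod, lang_prod]
  constructor
  · rintro ⟨⟨⟨p, hp⟩, ⟨q, hq⟩⟩, hn⟩
    by_cases h : u ++ [a] ∈ M1.lang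
    · obtain ⟨r, hr, hF⟩ := (h2 u a).1 ⟨⟨q, hq⟩, fun h' => hn ⟨h, h'⟩⟩
      exact ⟨(p, r), (reach_prod M1 M2 u (p, r)).2 ⟨hp, hr⟩, Or.inr hF⟩
    · obtain ⟨r, hr, hF⟩ := (h1 u a).1 ⟨⟨p, hp⟩, h⟩
      exact ⟨(r, q), (reach_prod M1 M2 u (r, q)).2 ⟨hr, hq⟩, Or.inl hF⟩
  · rintro ⟨s, hs, hF⟩
    have h := (reach_prod M1 M2 u s).1 hs
    refine ⟨⟨⟨_, h.1⟩, ⟨_, h.2⟩⟩, fun hn => ?_⟩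
    rcases hF with hF | hF
    · exact ((h1 u a).2 ⟨_, h.1, hF⟩).2 hn.1
    · exact ((h2 u a).2 ⟨_, h.2, hF⟩).2 hn.2
end

section
/- For every integer n ≥ 1 there exist a finite alphabet Σ of size 2n, an NFA M over Σ with all states final whose state set has exactly 2n+2 elements, and a relation F flanking M, such that every complete DFA D over Σ with L(D) = L(M) has at least 2^n states. -/
namespace Flank12

/-- Transitions: letter `(i,false)` sets bit `i`, letter `(i,true)` tests bit `i`. -/
def E (n : ℕ) : (Fin n × Bool) ⊕ Bool → Fin n × Bool → (Fin n × Bool) ⊕ Bool → Prop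
  | .inl (i, b), (j, false), q' => q' = .inl (i, b || decide (i = j))
  | .inl (i, b), (j, true), q' => i = j ∧ b = true ∧ ∃ c, q' = .inr c
  | .inr _, _, q' => ∃ c, q' = .inr c

/-- Forbidden letters. -/
def F (n : ℕ) : (Fin n × Bool) ⊕ Bool → Fin n × Bool → Prop
  | .inl (i, b), (j, t) => i = j ∧ b = false ∧ t = true
  | .inr _, _ => False

/-- The set of states coding a bit vector. -/
def cfg {n : ℕ} (f : Fin n → Bool) : Set ((Fin n × Bool) ⊕ Bool) :=
  {q | ∃ i, q = .inl (i, f i)}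

/-- The set of accepting sink states. -/
def top (n : ℕ) : Set ((Fin n × Bool) ⊕ Bool) := {q | ∃ c, q = .inr c}

/-- The automaton. -/
def M (n : ℕ) : NFA' ((Fin n × Bool) ⊕ Bool) (Fin n × Bool) :=
  NFA'.mk (E n) (cfg fun _ => false)

theorem step_set {n : ℕ} (f : Fin n → Bool) (j : Fin n) :
    (M n).step (cfg f) (j, false) = cfg (fun i => f i || decide (i = j)) := by
  ext q
  constructor
  · rintro ⟨_, ⟨i, rfl⟩, h⟩
    exact ⟨i, h⟩
  · rintro ⟨i, h⟩
    exact ⟨_, ⟨i, rfl⟩, h⟩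

theorem step_test_true {n : ℕ} (f : Fin n → Bool) (j : Fin n) (h : f j = true) :
    (M n).step (cfg f) (j, true) = top n := by
  ext q
  constructor
  · rintro ⟨_, ⟨i, rfl⟩, h⟩
    exact h.2.2
  · intro hq
    exact ⟨_, ⟨j, rfl⟩, rfl, h, hq⟩

theorem step_test_false {n : ℕ} (f : Fin n → Bool) (j : Fin n) (h : f j = false) :
    (M n).step (cfg f) (j, true) = ∅ := by
  ext q
  constructor
  · rintro ⟨_, ⟨i, rfl⟩, h1, h2, _⟩
    subst h1
    rw [h] at h2
    cases h2
  · intro hq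
    exact hq.elim

theorem step_top {n : ℕ} (a : Fin n × Bool) : (M n).step (top n) a = top n := by
  ext q
  constructor
  · rintro ⟨_, ⟨i, rfl⟩, h⟩
    exact h
  · intro hq
    exact ⟨_, ⟨true, rfl⟩, hq⟩

theorem step_empty {n : ℕ} (a : Fin n × Bool) : (M n).step ∅ a = ∅ := by
  ext q
  constructor
  · rintro ⟨_, h, _⟩
    exact h.elim
  · intro hq
    exact hq.elim

theorem reach_snoc {n : ℕ} (u : List (Fin n × Bool)) (a : Fin n × Bool) :
    (M n).reach (u ++ [a]) = (M n).step ((M n).reach u) a := by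
  simp [NFA'.reach]

theorem top_nonempty (n : ℕ) : (top n).Nonempty := ⟨_, true, rfl⟩

theorem cfg_nonempty {n : ℕ} (hn : 1 ≤ n) (f : Fin n → Bool) : (cfg f).Nonempty :=
  ⟨_, ⟨0, hn⟩, rfl⟩

theorem reach_cases {n : ℕ} (u : List (Fin n × Bool)) :
    (∃ f, (M n).reach u = cfg f) ∨ (M n).reach u = top n ∨ (M n).reach u = ∅ := by
  induction u using List.reverseRecOn with
  | nil => exact Or.inl ⟨_, rfl⟩
  | append_singleton u a ih =>
    rw [reach_snoc]
    rcases ih with ⟨f, h⟩ | h | h <;> rw [h]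
    · obtain ⟨j, t⟩ := a
      cases t
      · exact Or.inl ⟨_, step_set f j⟩
      · cases hf : f j
        · exact Or.inr (Or.inr (step_test_false f j hf))
        · exact Or.inr (Or.inl (step_test_true f j hf))
    · exact Or.inr (Or.inl (step_top a))
    · exact Or.inr (Or.inr (step_empty a))

theorem flanks {n : ℕ} (hn : 1 ≤ n) : (M n).Flanks (F n) := by
  intro u a
  change (((M n).reach u).Nonempty ∧ ¬ ((M n).reach (u ++ [a])).Nonempty) ↔ _
  rw [reach_snoc]
  rcases reach_cases u with ⟨f, h⟩ | h | h <;> rw [h]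
  · obtain ⟨j, t⟩ := a
    cases t
    · rw [step_set]
      constructor
      · rintro ⟨_, h⟩
        exact (h (cfg_nonempty hn _)).elim
      · rintro ⟨_, ⟨i, rfl⟩, _, _, h⟩
        cases h
    · cases hf : f j
      · rw [step_test_false f j hf]
        constructor
        · intro _
          exact ⟨_, ⟨j, rfl⟩, rfl, hf, rfl⟩
        · intro _
          exact ⟨cfg_nonempty hn _, Set.not_nonempty_empty⟩
      · rw [step_test_true f j hf]
        constructor
        · rintro ⟨_, h⟩
          exact (h (top_nonempty n)).elim
        · rintro ⟨_, ⟨i, rfl⟩, h1, h2, _⟩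
          subst h1
          rw [hf] at h2
          cases h2
  · rw [step_top]
    constructor
    · rintro ⟨h1, h2⟩
      exact (h2 h1).elim
    · rintro ⟨_, ⟨c, rfl⟩, h⟩
      exact h.elim
  · constructor
    · rintro ⟨h1, _⟩
      exact (Set.not_nonempty_empty h1).elim
    · rintro ⟨_, h, _⟩
      exact h.elim

theorem reach_word {n : ℕ} (l : List (Fin n)) :
    (M n).reach (l.map fun i => (i, false)) = cfg (fun i => decide (i ∈ l)) := by
  induction l using List.reverseRecOn with
  | nil => simp [NFA'.reach, M]
  | append_singleton l a ih =>
    rw [List.map_append, List.map_singleton, reach_snoc, ih, step_set]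
    simp

theorem test_word {n : ℕ} (l : List (Fin n)) (j : Fin n) :
    (l.map fun i => (i, false)) ++ [(j, true)] ∈ (M n).lang ↔ j ∈ l := by
  change ((M n).reach _).Nonempty ↔ _
  rw [reach_snoc, reach_word]
  by_cases h : j ∈ l
  · rw [step_test_true _ _ (by simpa using h)]
    simp [h, top_nonempty]
  · rw [step_test_false _ _ (by simpa using h)]
    simp [h]

end Flank12

theorem stmt12 (n : ℕ) (hn : 1 ≤ n) :
    ∃ (A : Type) (_ : Fintype A) (Q : Type) (_ : Fintype Q)
      (E : Q → A → Q → Prop) (I : Set Q) (F : Q → A → Prop),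
      Fintype.card A = 2 * n ∧
      Fintype.card Q = 2 * n + 2 ∧
      (NFA'.mk E I).Flanks F ∧
      ∀ (D : Type) [Fintype D], ∀ (δ : D → A → D) (q0 : D) (Acc : Set D),
        {u : List A | List.foldl δ q0 u ∈ Acc} = (NFA'.mk E I).lang →
        2 ^ n ≤ Fintype.card D := by
  refine ⟨Fin n × Bool, inferInstance, (Fin n × Bool) ⊕ Bool, inferInstance,
    Flank12.E n, Flank12.cfg fun _ => false, Flank12.F n, ?_, ?_, Flank12.flanks hn, ?_⟩
  · simp [mul_comm]
  · simp [mul_comm]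
  · intro D _ δ q0 Acc h
    have key : ∀ (s : Finset (Fin n)) (j : Fin n),
        δ (List.foldl δ q0 (s.toList.map fun i => (i, false))) (j, true) ∈ Acc ↔ j ∈ s := by
      intro s j
      have h1 := Flank12.test_word s.toList j
      have h2 := Set.ext_iff.mp h ((s.toList.map fun i => (i, false)) ++ [(j, true)])
      rw [Finset.mem_toList] at h1
      rw [← h1]
      simpa [Flank12.M] using h2
    have inj : Function.Injective
        (fun s : Finset (Fin n) => List.foldl δ q0 (s.toList.map fun i => (i, false))) := by
      intro s t hst
      ext j
      rw [← key s j, ← key t j]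
      simp only at hst
      rw [hst]
    have := Fintype.card_le_of_injective _ inj
    simpa using this
end

section
/- Fix n ≥ 1, let Π_n = {1,…,n} and Θ_n = {♯_1,…,♯_n} be disjoint copies of an n-element alphabet, Σ = Π_n ∪ Θ_n, and let L_n = Π_n* ∪ ⋃_{i=1}^n (Π_n*·i·Π_n*·♯_i) (all words over Π_n, together with all words over Π_n containing at least one occurrence of i followed by the single symbol ♯_i). Then every complete DFA D over Σ with L(D) = L_n has at least 2^n states. -/
/-- The language `L_n` over `Σ = Π_n ⊕ Θ_n` (where `Sum.inl i` is the plain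
symbol `i` and `Sum.inr i` is `♯_i`): all words over `Π_n`, together with all
words `v · ♯_i` where `v` is a word over `Π_n` containing the symbol `i`. -/
def Ln (n : ℕ) : Set (List (Fin n ⊕ Fin n)) :=
  {u | ∀ x ∈ u, x.isLeft = true} ∪
  ⋃ i : Fin n, {w | ∃ v : List (Fin n ⊕ Fin n),
    (∀ x ∈ v, x.isLeft = true) ∧ Sum.inl i ∈ v ∧ w = v ++ [Sum.inr i]}

/-- every complete DFA accepting `L_n` has at least `2^n` states. -/
theorem stmt13 (n : ℕ) (hn : 1 ≤ n) :
    ∀ (D : Type) [Fintype D], ∀ (δ : D → (Fin n ⊕ Fin n) → D) (q0 : D) (Acc : Set D),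
      {u : List (Fin n ⊕ Fin n) | List.foldl δ q0 u ∈ Acc} = Ln n →
      2 ^ n ≤ Fintype.card D := by
  intro D _ δ q0 Acc h
  let w : Finset (Fin n) → List (Fin n ⊕ Fin n) := fun S => S.toList.map Sum.inl
  have key : ∀ (S : Finset (Fin n)) (i : Fin n),
      δ (List.foldl δ q0 (w S)) (Sum.inr i) ∈ Acc ↔ i ∈ S := by
    intro S i
    have h1 : (w S ++ [Sum.inr i]) ∈ {u : List (Fin n ⊕ Fin n) | List.foldl δ q0 u ∈ Acc} ↔
        (w S ++ [Sum.inr i]) ∈ Ln n := by rw [h]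
    rw [Set.mem_setOf_eq, List.foldl_append] at h1
    refine h1.trans ⟨?_, ?_⟩
    · rintro (h2 | h2)
      · have := h2 (Sum.inr i) (by simp)
        simp at this
      · obtain ⟨j, v, -, hj, he⟩ := Set.mem_iUnion.1 h2
        obtain ⟨e1, e2⟩ := List.append_inj' he rfl
        have e3 : i = j := by simpa using e2
        subst e3
        rw [← e1] at hj
        simpa [w] using hj
    · intro hi
      refine Or.inr (Set.mem_iUnion.2 ⟨i, w S, ?_, ?_, rfl⟩)
      · intro x hx
        obtain ⟨a, -, rfl⟩ := List.mem_map.1 hx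
        rfl
      · simpa [w] using hi
  have inj : Function.Injective (fun S : Finset (Fin n) => List.foldl δ q0 (w S)) := by
    intro S T hST
    ext i
    rw [← key S i, ← key T i]
    exact iff_of_eq (congrArg (fun q => δ q (Sum.inr i) ∈ Acc) hST)
  simpa using Fintype.card_le_of_injective _ inj
end

section
/- Fix n ≥ 1, let Π_n = {1,…,n} and Θ_n = {♯_1,…,♯_n} be disjoint copies of an n-element alphabet, Σ = Π_n ∪ Θ_n, and let L_n = Π_n* ∪ ⋃_{i=1}^n (Π_n*·i·Π_n*·♯_i). Let A_n be the NFA over Σ with state set {p, r} ∪ {p_i | i ∈ 1..n} ∪ {q_i | i ∈ 1..n} (so 2n+2 states), initial state p, and transitions, for every i ∈ 1..n: p →i q_i, p_i →i q_i, q_i →i q_i; for every j ≠ i: p →j p_i, p_i →j p_i, q_i →j q_i; and q_i →♯_i r. Then L(A_n) = L_n. -/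
/-- The states of the NFA `A_n`: `p`, `r` and the states `p_i`, `q_i` for `i ∈ 1..n`. -/
inductive St (n : ℕ) : Type where
  | p : St n
  | r : St n
  | pi (i : Fin n) : St n
  | qi (i : Fin n) : St n
  deriving DecidableEq

instance (n : ℕ) : Fintype (St n) := by
  classical
  have : Function.Surjective
      (fun x : (Unit ⊕ Unit) ⊕ (Fin n ⊕ Fin n) =>
        match x with
        | .inl (.inl _) => St.p
        | .inl (.inr _) => St.r
        | .inr (.inl i) => St.pi i
        | .inr (.inr i) => St.qi i) := by
    intro s; cases s with
    | p => exact ⟨.inl (.inl ()), rfl⟩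
    | r => exact ⟨.inl (.inr ()), rfl⟩
    | pi i => exact ⟨.inr (.inl i), rfl⟩
    | qi i => exact ⟨.inr (.inr i), rfl⟩
  exact Fintype.ofSurjective _ this

/-- The NFA `A_n`: initial state `p`, and for every `i ∈ 1..n` the transitions
`p →i q_i`, `p_i →i q_i`, `q_i →i q_i`; for every `j ≠ i` the transitions
`p →j p_i`, `p_i →j p_i`, `q_i →j q_i`; and `q_i →♯_i r`. -/
def An (n : ℕ) : NFA' (St n) (Fin n ⊕ Fin n) where
  E s x s' :=
    (∃ i : Fin n, s = St.p ∧ x = Sum.inl i ∧ s' = St.qi i) ∨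
    (∃ i : Fin n, s = St.pi i ∧ x = Sum.inl i ∧ s' = St.qi i) ∨
    (∃ i j : Fin n, s = St.qi i ∧ x = Sum.inl j ∧ s' = St.qi i) ∨
    (∃ i j : Fin n, j ≠ i ∧ s = St.p ∧ x = Sum.inl j ∧ s' = St.pi i) ∨
    (∃ i j : Fin n, j ≠ i ∧ s = St.pi i ∧ x = Sum.inl j ∧ s' = St.pi i) ∨
    (∃ i : Fin n, s = St.qi i ∧ x = Sum.inr i ∧ s' = St.r)
  I := {St.p}

/-- Explicit description of the states reached after reading a word. -/
def stInv (n : ℕ) (u : List (Fin n ⊕ Fin n)) : St n → Prop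
  | St.p => u = []
  | St.r => ∃ (i : Fin n) (v : List (Fin n ⊕ Fin n)),
      (∀ x ∈ v, x.isLeft = true) ∧ Sum.inl i ∈ v ∧ u = v ++ [Sum.inr i]
  | St.pi i => u ≠ [] ∧ (∀ x ∈ u, x.isLeft = true) ∧ Sum.inl i ∉ u
  | St.qi i => (∀ x ∈ u, x.isLeft = true) ∧ Sum.inl i ∈ u

theorem mem_reach_append (n : ℕ) (u : List (Fin n ⊕ Fin n)) (a : Fin n ⊕ Fin n) (s : St n) :
    s ∈ (An n).reach (u ++ [a]) ↔ ∃ q ∈ (An n).reach u, (An n).E q a s := by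
  simp [NFA'.reach, NFA'.step]

theorem mem_reach_iff (n : ℕ) (u : List (Fin n ⊕ Fin n)) :
    ∀ s, s ∈ (An n).reach u ↔ stInv n u s := by
  induction u using List.reverseRecOn with
  | nil =>
    intro s
    cases s <;> simp [NFA'.reach, An, stInv]
  | append_singleton u a ih =>
    intro s
    rw [mem_reach_append]
    simp only [ih]
    constructor
    · rintro ⟨q, hq, h⟩
      rcases h with ⟨i, rfl, rfl, rfl⟩ | ⟨i, rfl, rfl, rfl⟩ | ⟨i, j, rfl, rfl, rfl⟩ |
        ⟨i, j, hij, rfl, rfl, rfl⟩ | ⟨i, j, hij, rfl, rfl, rfl⟩ | ⟨i, rfl, rfl, rfl⟩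
      · simp only [stInv] at hq; subst hq; simp [stInv]
      · simp only [stInv] at hq ⊢; grind
      · simp only [stInv] at hq ⊢; grind
      · simp only [stInv] at hq ⊢; subst hq; simp [Ne.symm hij]
      · simp only [stInv] at hq ⊢; refine ⟨by simp, ?_, ?_⟩ <;> grind
      · exact ⟨i, u, hq.1, hq.2, rfl⟩
    · intro h
      cases s with
      | p => simp [stInv] at h
      | r =>
        obtain ⟨i, v, h1, h2, h3⟩ := h
        obtain ⟨rfl, h4⟩ := List.append_inj' h3 rfl
        obtain rfl : a = Sum.inr i := by simpa using h4
        exact ⟨St.qi i, ⟨h1, h2⟩, by simp [An]⟩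
      | pi i =>
        obtain ⟨-, h1, h2⟩ := h
        have ha := h1 a (by simp)
        obtain ⟨j, rfl⟩ := Sum.isLeft_iff.1 ha
        have hj : j ≠ i := by rintro rfl; simp at h2
        by_cases hu : u = []
        · exact ⟨St.p, hu, by simp [An, hj]⟩
        · exact ⟨St.pi i, ⟨hu, fun x hx => h1 x (by simp [hx]), fun hx => h2 (by simp [hx])⟩,
            by simp [An, hj]⟩
      | qi i =>
        obtain ⟨h1, h2⟩ := h
        have ha := h1 a (by simp)
        obtain ⟨j, rfl⟩ := Sum.isLeft_iff.1 ha
        have h1u : ∀ x ∈ u, x.isLeft = true := fun x hx => h1 x (by simp [hx])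
        by_cases hi : Sum.inl i ∈ u
        · exact ⟨St.qi i, ⟨h1u, hi⟩, by simp [An]⟩
        · have hj : i = j := by simpa [hi] using h2
          subst hj
          by_cases hu : u = []
          · exact ⟨St.p, hu, by simp [An]⟩
          · exact ⟨St.pi i, ⟨hu, h1u, hi⟩, by simp [An]⟩

/-- the NFA `A_n` accepts exactly the language `L_n`. -/
theorem stmt14 (n : ℕ) (hn : 1 ≤ n) : (An n).lang = Ln n := by
  ext u
  simp only [NFA'.lang, Set.Nonempty, Set.mem_setOf_eq, mem_reach_iff, Ln, Set.mem_union,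
    Set.mem_iUnion]
  constructor
  · rintro ⟨s, hs⟩
    cases s with
    | p => left; simp only [stInv] at hs; subst hs; simp
    | r => exact Or.inr hs
    | pi i => exact Or.inl hs.2.1
    | qi i => exact Or.inl hs.1
  · rintro (h | h)
    · cases u with
      | nil => exact ⟨St.p, rfl⟩
      | cons a u =>
        obtain ⟨j, rfl⟩ := Sum.isLeft_iff.1 (h a (by simp))
        exact ⟨St.qi j, h, by simp⟩
    · exact ⟨St.r, h⟩
end

section
/- Fix n ≥ 1, let Π_n = {1,…,n} and Θ_n = {♯_1,…,♯_n} be disjoint copies of an n-element alphabet and Σ = Π_n ∪ Θ_n. Let A_n be the NFA over Σ with state set {p, r} ∪ {p_i | i ∈ 1..n} ∪ {q_i | i ∈ 1..n}, initial state p, and transitions, for every i ∈ 1..n: p →i q_i, p_i →i q_i, q_i →i q_i; for every j ≠ i: p →j p_i, p_i →j p_i, q_i →j q_i; and q_i →♯_i r. Define F as the smallest relation such that (p_i, ♯_i) ∈ F and (p, ♯_i) ∈ F for all i ∈ 1..n, and (r, a) ∈ F for every a ∈ Σ. Then F flanks A_n. -/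
/-- Existence of a state, split by the kind of state. -/
theorem exists_state (n : ℕ) (P : St n → Prop) :
    (∃ q, P q) ↔ P St.p ∨ P St.r ∨ (∃ i, P (St.pi i)) ∨ ∃ i, P (St.qi i) := by
  constructor
  · rintro ⟨q, hq⟩
    cases q
    · exact Or.inl hq
    · exact Or.inr (Or.inl hq)
    · exact Or.inr (Or.inr (Or.inl ⟨_, hq⟩))
    · exact Or.inr (Or.inr (Or.inr ⟨_, hq⟩))
  · rintro (h | h | ⟨i, h⟩ | ⟨i, h⟩) <;> exact ⟨_, h⟩

/-- The shape of the state sets reachable in `A_n`. -/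
theorem reach_shape (n : ℕ) (u : List (Fin n ⊕ Fin n)) :
    (An n).reach u = {St.p} ∨ (An n).reach u = {St.r} ∨ (An n).reach u = ∅ ∨
    ∃ T : Set (Fin n), T.Nonempty ∧
      (An n).reach u = {s | ∃ i, (i ∈ T ∧ s = St.qi i) ∨ (i ∉ T ∧ s = St.pi i)} := by
  induction u using List.reverseRecOn with
  | nil => left; rfl
  | append_singleton u a ih =>
    have hs : (An n).reach (u ++ [a]) = (An n).step ((An n).reach u) a := by
      simp [NFA'.reach]
    rw [hs]
    rcases ih with h | h | h | ⟨T, hT, h⟩ <;> rw [h]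
    · rcases a with j | j
      · right; right; right
        refine ⟨{j}, ⟨j, rfl⟩, ?_⟩
        ext s
        cases s <;> simp [NFA'.step, An, eq_comm]
      · right; right; left
        ext s
        simp [NFA'.step, An]
    · right; right; left
      ext s
      simp [NFA'.step, An]
    · right; right; left
      ext s
      simp [NFA'.step]
    · rcases a with j | j
      · right; right; right
        refine ⟨insert j T, ⟨j, Or.inl rfl⟩, ?_⟩
        ext s
        cases s <;> simp [NFA'.step, An, exists_state] <;> grind
      · by_cases hj : j ∈ T
        · right; left
          ext s
          cases s <;> simp [NFA'.step, An] <;> grind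
        · right; right; left
          ext s
          cases s <;> simp [NFA'.step, An] <;> grind

/-- the relation consisting of the pairs `(p, ♯_i)` and
`(p_i, ♯_i)` for `i ∈ 1..n`, together with `(r, a)` for every symbol `a`,
flanks the NFA `A_n`. -/
theorem stmt15 (n : ℕ) (hn : 1 ≤ n) :
    (An n).Flanks (fun s x =>
      (∃ i : Fin n, s = St.p ∧ x = Sum.inr i) ∨
      (∃ i : Fin n, s = St.pi i ∧ x = Sum.inr i) ∨
      s = St.r) := by
  intro u a
  have hs : (An n).reach (u ++ [a]) = (An n).step ((An n).reach u) a := by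
    simp [NFA'.reach]
  simp only [NFA'.lang, Set.mem_ofPred_eq, hs]
  rcases reach_shape n u with h | h | h | ⟨T, ⟨t, ht⟩, h⟩ <;> rw [h]
  · rcases a with j | j
    · have : ((An n).step {St.p} (Sum.inl j)).Nonempty :=
        ⟨St.qi j, St.p, rfl, Or.inl ⟨j, rfl, rfl, rfl⟩⟩
      simp [this]
    · simp [NFA'.step, An, Set.Nonempty]
  · simp [NFA'.step, An, Set.Nonempty]
  · simp
  · rcases a with j | j
    · constructor
      · rintro ⟨_, h2⟩
        exact absurd ⟨St.qi t, St.qi t, ⟨t, Or.inl ⟨ht, rfl⟩⟩,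
          Or.inr (Or.inr (Or.inl ⟨t, j, rfl, rfl, rfl⟩))⟩ h2
      · rintro ⟨q, ⟨i, hi⟩, hF⟩
        grind
    · constructor
      · rintro ⟨_, h2⟩
        have hj : j ∉ T := fun hj => h2 ⟨St.r, St.qi j, ⟨j, Or.inl ⟨hj, rfl⟩⟩,
          Or.inr (Or.inr (Or.inr (Or.inr (Or.inr ⟨j, rfl, rfl, rfl⟩))))⟩
        exact ⟨St.pi j, ⟨j, Or.inr ⟨hj, rfl⟩⟩, Or.inr (Or.inl ⟨j, rfl, rfl⟩)⟩
      · rintro ⟨q, ⟨i, hi⟩, hF⟩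
        refine ⟨⟨St.qi t, t, Or.inl ⟨ht, rfl⟩⟩, ?_⟩
        rintro ⟨s, q', ⟨k, hk⟩, hE⟩
        simp only [An] at hE
        grind
end

section
/- The class of flankable NFA is not closed under non-injective relabeling: there exist finite alphabets Σ and Γ, a map h : Σ → Γ, and an NFA M over Σ with all states final such that M is flankable, but the relabeled NFA h(M) over Γ — with the same states and initial states as M and transitions q →b q' in h(M) iff q →a q' in M for some a with h(a) = b — is not flankable. -/
/-- Deterministic automata are flankable. -/
theorem det_flanks {Q A : Type} (M : NFA' Q A) (hI : M.I.Subsingleton)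
    (hE : ∀ q a q1 q2, M.E q a q1 → M.E q a q2 → q1 = q2) :
    M.Flanks (fun q a => ∀ q', ¬ M.E q a q') := by
  have hs : ∀ u : List A, (M.reach u).Subsingleton := by
    intro u
    induction u using List.reverseRecOn with
    | nil => exact hI
    | append_singleton u a ih =>
      simp only [NFA'.reach, List.foldl_append, List.foldl_cons, List.foldl_nil]
      rintro x ⟨q, hq, hx⟩ y ⟨q2, hq2, hy⟩
      obtain rfl := ih hq hq2
      exact hE _ _ _ _ hx hy
  intro u a
  have hr : M.reach (u ++ [a]) = M.step (M.reach u) a := by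
    simp [NFA'.reach, List.foldl_append]
  simp only [NFA'.lang, Set.mem_setOf_eq, hr]
  constructor
  · rintro ⟨⟨q, hq⟩, hn⟩
    exact ⟨q, hq, fun q' h => hn ⟨q', q, hq, h⟩⟩
  · rintro ⟨q, hq, hF⟩
    refine ⟨⟨q, hq⟩, ?_⟩
    rintro ⟨q', q2, hq2, h⟩
    obtain rfl := hs u hq hq2
    exact hF _ h

/-- flankability is not preserved by (non-injective) relabeling:
there are alphabets `A`, `B`, a map `h : A → B` and a flankable NFA `M` over `A`
whose relabeling along `h` is not flankable. -/
theorem stmt16 :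
    ∃ (A B : Type) (_ : Fintype A) (_ : Fintype B) (h : A → B)
      (Q : Type) (_ : Fintype Q) (M : NFA' Q A),
      (∃ F : Q → A → Prop, M.Flanks F) ∧
      ¬ ∃ F' : Q → B → Prop,
          (NFA'.mk (fun q b q' => ∃ a, h a = b ∧ M.E q a q') M.I).Flanks F' := by

  refine ⟨Bool, Unit, inferInstance, inferInstance, fun _ => (), Fin 3, inferInstance,
    ⟨fun q a q' => (q = 0 ∧ a = false ∧ q' = 1) ∨ (q = 0 ∧ a = true ∧ q' = 2) ∨
      (q = 2 ∧ a = true ∧ q' = 1), {0}⟩, ⟨_, det_flanks _ ?_ ?_⟩, ?_⟩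
  · exact Set.subsingleton_singleton
  · simp only
    decide
  · rintro ⟨F, hF⟩
    have h1 := hF [()] ()
    have h2 := hF [(), ()] ()
    have hp : F 1 () := by
      obtain ⟨q, hq, h⟩ := h2.1 (by
        simp [NFA'.lang, NFA'.reach, NFA'.step, Set.Nonempty])
      have : q = 1 := by
        simpa [NFA'.reach, NFA'.step] using hq
      exact this ▸ h
    have h3 := (h1.2 ⟨1, by simp [NFA'.reach, NFA'.step], hp⟩).2
    apply h3
    exact ⟨1, by simp [NFA'.reach, NFA'.step]⟩
end
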